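/- Let (T1, T2) be a pair of commuting contractions on a complex Hilbert space H. Then there exist a complex Hilbert space K, a linear isometry Π : H → K, and a pair of commuting isometries (V1, V2) on K such that V1* ∘ Π = Π ∘ T1* and V2* ∘ Π = Π ∘ T2*; moreover (Π, V1, V2) can be chosen minimal, i.e. so that the linear span of ⋃_{n1,n2 ≥ 0} V1^{n1} V2^{n2} (range Π) is dense in K. (Andô's lifting theorem, reproved constructively in the paper.) -/

import Mathlib

open ContinuousLinearMap

universe u

open scoped InnerProductSpace

/-!
Let `D₁`, `D₂` be defect operators, `‖Tⱼ h‖² + ‖Dⱼ h‖² = ‖h‖²`. The idea, due to Andô, is to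
lift both contractions to `H ⊕ ℓ²(ℕ, B)` by Schäffer-type isometries and to correct them by a
unitary `G` of `B` so that they commute.

Since `T₁` and `T₂` commute, `‖D₁ T₂ h‖² + ‖D₂ h‖² = ‖h‖² - ‖T₁ T₂ h‖² = ‖D₂ T₁ h‖² + ‖D₁ h‖²`,
so `(D₁ T₂ h, D₂ h) ↦ (D₂ T₁ h, D₁ h)` is a well-defined isometry between subspaces of `H ⊕ H`.
It extends to a partial isometry `c` of `H ⊕ H` (`exists_partial_isometry`), and the Halmos-type
matrix `[[c, 1 - c c*], [1 - c* c, -c*]]` extends it to a unitary `G` of the doubled space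
`B = (H ⊕ H) ⊕ (H ⊕ H)` (`exists_unitary`); no comparison of codimensions is needed.

On `B` there are partial isometries `A : (p, q) ↦ (0, p)` and `C : (p, q) ↦ (q, 0)` (acting on
both summands `H ⊕ H`), with `A² = C² = 0`, `A C + C A = 1`, `A* A + C* C = 1`, `C* A = 0`, and the
inclusion `ι` of `H` as the very first coordinate satisfies `C ι = 0`. Writing `b zⁿ` for the
sequence with the single entry `b` at index `n`, the lifts are
* `V₁ h = T₁ h + G ι D₁ h`, `V₁ (b zⁿ) = (G A b) zⁿ + (G C b) zⁿ⁺¹`;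
* `V₂ h = T₂ h + ι D₂ h`,   `V₂ (b zⁿ) = (A G⁻¹ b) zⁿ + (C G⁻¹ b) zⁿ⁺¹`.

They are isometries by `exists_lift_isometry`. Comparing coefficients (`lift_commute`), they commute
because of the identities for `A` and `C` and because
`G (ι D₁ T₂ h + A ι D₂ h) = ι D₂ T₁ h + A ι D₁ h`, which is how `G` was chosen. Neither `V₁` nor
`V₂` maps `ℓ²(ℕ, B)` into `H`, so the adjoints intertwine as required. Minimality is obtained by
restricting to the closed span of the orbit of `H` (`exists_minimal`).
-/

/-! ### Unitary extension on the doubled space -/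

/-- An isometric correspondence `A₁ h ↦ A₂ h` extends to a partial isometry `C` whose initial
projection `C* C` fixes every `A₁ h`: extend by continuity to the closure of the range of `A₁` and
by zero on its orthogonal complement. -/
lemma exists_partial_isometry {H E : Type u} [NormedAddCommGroup H] [InnerProductSpace ℂ H]
    [NormedAddCommGroup E] [InnerProductSpace ℂ E] [CompleteSpace E]
    (A₁ A₂ : H →ₗ[ℂ] E) (hA : ∀ h, ‖A₁ h‖ = ‖A₂ h‖) :
    ∃ C : E →L[ℂ] E, (∀ h, C (A₁ h) = A₂ h) ∧ (∀ h, adjoint C (C (A₁ h)) = A₁ h) ∧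
      ∀ x, C (adjoint C (C x)) = C x := by
  set M : Submodule ℂ E := (LinearMap.range A₁).topologicalClosure with hM
  have hmem : ∀ h, A₁ h ∈ M := fun h => Submodule.le_topologicalClosure _ ⟨h, rfl⟩
  let e : H →ₗ[ℂ] M := A₁.codRestrict M hmem
  have he : DenseRange e := by
    intro x
    rw [closure_subtype, ← Set.range_comp]
    exact x.2
  have hb : ∀ x, ‖A₂ x‖ ≤ 1 * ‖e x‖ := fun x => by
    rw [one_mul, ← hA]; exact le_rfl
  let f : M →L[ℂ] E := A₂.extendOfNorm e
  have hfe : ∀ h, f (e h) = A₂ h := fun h => LinearMap.extendOfNorm_eq he ⟨1, hb⟩ h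
  have hfn : ∀ x, ‖f x‖ = ‖x‖ := by
    refine he.induction ?_ (isClosed_eq (by fun_prop) (by fun_prop))
    rintro _ ⟨h, rfl⟩
    rw [hfe, ← hA]; rfl
  let fi : M →ₗᵢ[ℂ] E := ⟨f.toLinearMap, hfn⟩
  have hfi : ∀ x y, ⟪f x, f y⟫_ℂ = ⟪x, y⟫_ℂ := fun x y => fi.inner_map_map x y
  have : CompleteSpace M := (Submodule.isClosed_topologicalClosure _).completeSpace_coe
  let C : E →L[ℂ] E := f ∘L M.orthogonalProjectionOnto
  have hC : ∀ x, C x = f (M.orthogonalProjectionOnto x) := fun x => rfl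
  have hCC : ∀ x, adjoint C (C x) = (M.orthogonalProjectionOnto x : E) := by
    intro x
    refine ext_inner_right ℂ fun y => ?_
    rw [adjoint_inner_left, hC, hC, hfi]
    simp
  have hP : ∀ h, M.orthogonalProjectionOnto (A₁ h) = e h := fun h =>
    M.orthogonalProjectionOnto_mem_subspace_eq_self (e h)
  refine ⟨C, fun h => ?_, fun h => ?_, fun x => ?_⟩
  · rw [hC, hP, hfe]
  · rw [hCC, hP]; rfl
  · rw [hCC, hC, M.orthogonalProjectionOnto_mem_subspace_eq_self, hC]

/-- On the doubled space `E ⊕ E`, an isometric correspondence `(A₁ h, 0) ↦ (A₂ h, 0)` always extends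
to a unitary. -/
lemma exists_unitary {H E : Type u} [NormedAddCommGroup H] [InnerProductSpace ℂ H]
    [NormedAddCommGroup E] [InnerProductSpace ℂ E] [CompleteSpace E]
    (A₁ A₂ : H →ₗ[ℂ] E) (hA : ∀ h, ‖A₁ h‖ = ‖A₂ h‖) :
    ∃ G : WithLp 2 (E × E) ≃ₗᵢ[ℂ] WithLp 2 (E × E),
      ∀ h, G (WithLp.toLp 2 (A₁ h, 0)) = WithLp.toLp 2 (A₂ h, 0) := by
  obtain ⟨C, h1, h2, h3⟩ := exists_partial_isometry A₁ A₂ hA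
  have h4 : ∀ x, adjoint C (C (adjoint C x)) = adjoint C x := fun x => by
    refine ext_inner_right ℂ fun y => ?_
    rw [adjoint_inner_left, ← adjoint_inner_right, adjoint_inner_left, h3, ← adjoint_inner_left]
  have h5 : ∀ x y, ⟪C (adjoint C x), y⟫_ℂ = ⟪x, C (adjoint C y)⟫_ℂ := fun x y => by
    rw [← adjoint_inner_right, adjoint_inner_left]
  -- The matrix `[[C, 1 - C C*], [1 - C* C, -C*]]`; its inverse is its adjoint.
  let g : WithLp 2 (E × E) ≃ₗ[ℂ] WithLp 2 (E × E) :=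
    { toFun := fun v => WithLp.toLp 2
        (C v.fst + (v.snd - C (adjoint C v.snd)), (v.fst - adjoint C (C v.fst)) - adjoint C v.snd)
      map_add' := fun v w => by
        refine (WithLp.equiv 2 _).injective (Prod.ext ?_ ?_) <;> simp <;> abel
      map_smul' := fun c v => by
        refine (WithLp.equiv 2 _).injective (Prod.ext ?_ ?_) <;> simp [smul_sub]
      invFun := fun v => WithLp.toLp 2
        (adjoint C v.fst + (v.snd - adjoint C (C v.snd)), (v.fst - C (adjoint C v.fst)) - C v.snd)
      left_inv := fun v => by
        refine (WithLp.equiv 2 _).injective (Prod.ext ?_ ?_) <;> simp [h3, h4]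
      right_inv := fun v => by
        refine (WithLp.equiv 2 _).injective (Prod.ext ?_ ?_) <;> simp [h3, h4] }
  have hg : ∀ v w, ⟪g v, w⟫_ℂ = ⟪v, g.symm w⟫_ℂ := fun v w => by
    simp only [WithLp.prod_inner_apply]
    simp [g, inner_add_left, inner_add_right, inner_sub_left, inner_sub_right, adjoint_inner_left,
      adjoint_inner_right, h5]
    ring
  refine ⟨⟨g, fun v => ?_⟩, fun h => ?_⟩
  · have : ‖g v‖ ^ 2 = ‖v‖ ^ 2 := by
      have := hg v (g v)
      rw [g.symm_apply_apply, inner_self_eq_norm_sq_to_K, inner_self_eq_norm_sq_to_K] at this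
      exact_mod_cast this
    exact (sq_eq_sq₀ (norm_nonneg _) (norm_nonneg _)).1 this
  · change g _ = _
    refine (WithLp.equiv 2 _).injective (Prod.ext ?_ ?_)
    · simp [g, h1]
    · simp [g, h2]

/-! ### Isometric lifts on `H ⊕ ℓ²(ℕ, B)` -/

/-- The Hilbert direct sum `H ⊕ ℓ²(ℕ, B)` on which the isometric lifts act. -/
abbrev LiftSpace (H B : Type u) [NormedAddCommGroup H] [NormedAddCommGroup B] : Type u :=
  WithLp 2 (H × lp (fun _ : ℕ => B) 2)

section lift

variable {H B : Type u} [NormedAddCommGroup H] [InnerProductSpace ℂ H]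
  [NormedAddCommGroup B] [InnerProductSpace ℂ B] [CompleteSpace B]

/-- The Toeplitz-type operator `A + z C` on `ℓ²(ℕ, B)`, which is an isometry because
`A* A + C* C = 1` and `C* A = 0`. -/
lemma exists_bidiagonal (A C : B →ₗ[ℂ] B)
    (hAC : ∀ b, ‖A b‖ ^ 2 + ‖C b‖ ^ 2 = ‖b‖ ^ 2) (hCA : ∀ b b', ⟪C b, A b'⟫_ℂ = 0) :
    ∃ U : lp (fun _ : ℕ => B) 2 →ₗᵢ[ℂ] lp (fun _ : ℕ => B) 2,
      ∀ n b, U (lp.single 2 n b) = lp.single 2 n (A b) + lp.single 2 (n + 1) (C b) := by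
  have hAC' : ∀ b b', ⟪A b, C b'⟫_ℂ = 0 := fun b b' => inner_eq_zero_symm.1 (hCA b' b)
  let F : ℕ → B →ₗ[ℂ] lp (fun _ : ℕ => B) 2 := fun n =>
    lp.lsingle 2 n ∘ₗ A + lp.lsingle 2 (n + 1) ∘ₗ C
  have hF : ∀ n b, F n b = lp.single 2 n (A b) + lp.single 2 (n + 1) (C b) := fun _ _ => rfl
  have hin : ∀ (i j : ℕ) (b b' : B),
      ⟪(lp.single 2 i b : lp (fun _ : ℕ => B) 2), lp.single 2 j b'⟫_ℂ
        = if i = j then ⟪b, b'⟫_ℂ else 0 := by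
    intro i j b b'
    rw [lp.inner_single_left, lp.coeFn_single]
    split_ifs with h
    · subst h; simp
    · simp [h]
  have hiso : ∀ n b, ‖F n b‖ = ‖b‖ := fun n b => by
    rw [← sq_eq_sq₀ (norm_nonneg _) (norm_nonneg _), ← hAC, hF, sq, sq, sq,
      norm_add_sq_eq_norm_sq_add_norm_sq_of_inner_eq_zero _ _ (𝕜 := ℂ),
      lp.norm_single (by norm_num), lp.norm_single (by norm_num)]
    rw [hin, if_neg (by omega)]
  let V : ℕ → B →ₗᵢ[ℂ] lp (fun _ : ℕ => B) 2 := fun n => ⟨F n, hiso n⟩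
  have hV : OrthogonalFamily ℂ (fun _ : ℕ => B) V := by
    intro i j hij v w
    change ⟪F i v, F j w⟫_ℂ = 0
    rw [hF, hF, inner_add_left, inner_add_right, inner_add_right]
    simp only [hin, hCA, hAC', ite_self, if_neg hij, if_neg (show ¬ i + 1 = j + 1 by omega)]
    simp
  exact ⟨hV.linearIsometry, fun n b => hV.linearIsometry_apply_single b⟩

/-- The isometry `(h, y) ↦ (T h, a h + (A + z C) y)`, where `a h` is placed at index `0`. The last
conclusion says that the first coordinate of the image depends only on the `H`-component, which
makes the operator a lift of `T`. -/
lemma exists_lift_isometry (T : H →ₗ[ℂ] H) (a : H →ₗ[ℂ] B) (A C : B →ₗ[ℂ] B)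
    (hT : ∀ h, ‖T h‖ ^ 2 + ‖a h‖ ^ 2 = ‖h‖ ^ 2)
    (hAC : ∀ b, ‖A b‖ ^ 2 + ‖C b‖ ^ 2 = ‖b‖ ^ 2) (hCA : ∀ b b', ⟪C b, A b'⟫_ℂ = 0)
    (haA : ∀ h b, ⟪a h, A b⟫_ℂ = 0) :
    ∃ V : LiftSpace H B →ₗᵢ[ℂ] LiftSpace H B,
      (∀ h, V (WithLp.toLp 2 (h, 0)) = WithLp.toLp 2 (T h, lp.single 2 0 (a h))) ∧
      (∀ n b, V (WithLp.toLp 2 (0, lp.single 2 n b)) =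
        WithLp.toLp 2 (0, lp.single 2 n (A b) + lp.single 2 (n + 1) (C b))) ∧
      ∀ k, (V k).fst = T k.fst := by
  obtain ⟨U, hU⟩ := exists_bidiagonal A C hAC hCA
  have horth : ∀ h y, ⟪(lp.single 2 0 (a h) : lp (fun _ : ℕ => B) 2), U y⟫_ℂ = 0 := by
    intro h
    have : (innerSL ℂ (lp.single 2 0 (a h) : lp (fun _ : ℕ => B) 2)) ∘L
        U.toContinuousLinearMap = 0 := by
      refine lp.ext_continuousLinearMap (by norm_num) fun n => ?_
      ext b
      simp [hU, inner_add_right, lp.inner_single_left]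
      cases n <;> simp [haA]
    exact fun y => DFunLike.congr_fun this y
  let F : LiftSpace H B →ₗ[ℂ] LiftSpace H B :=
    { toFun := fun k => WithLp.toLp 2 (T k.fst, lp.lsingle (𝕜 := ℂ) 2 0 (a k.fst) + U k.snd)
      map_add' := fun v w => by
        refine (WithLp.equiv 2 _).injective (Prod.ext ?_ ?_)
        · simp
        · simp only [WithLp.add_fst, WithLp.add_snd, map_add]
          exact add_add_add_comm _ _ _ _
      map_smul' := fun c v => by
        refine (WithLp.equiv 2 _).injective (Prod.ext ?_ ?_)
        · simp
        · simp only [WithLp.smul_fst, WithLp.smul_snd, map_smul]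
          exact (smul_add c _ _).symm }
  refine ⟨⟨F, fun k => ?_⟩, fun h => ?_, fun n b => ?_, fun k => rfl⟩
  · rw [← sq_eq_sq₀ (norm_nonneg _) (norm_nonneg _), WithLp.prod_norm_sq_eq_of_L2,
      WithLp.prod_norm_sq_eq_of_L2]
    change ‖T k.fst‖ ^ 2 + ‖lp.single 2 0 (a k.fst) + U k.snd‖ ^ 2 = _
    rw [sq ‖_ + _‖, norm_add_sq_eq_norm_sq_add_norm_sq_of_inner_eq_zero _ _ (horth _ _),
      lp.norm_single (by norm_num), U.norm_map, ← hT k.fst]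
    ring
  · change WithLp.toLp 2 (T h, lp.single 2 0 (a h) + U 0) = _
    simp
  · change WithLp.toLp 2 (T 0, lp.lsingle (𝕜 := ℂ) 2 0 (a 0) + U (lp.single 2 n b)) = _
    rw [map_zero, map_zero, map_zero, zero_add, hU]

lemma LiftSpace.ext_clm {f g : LiftSpace H B →L[ℂ] LiftSpace H B}
    (h1 : ∀ h, f (WithLp.toLp 2 (h, 0)) = g (WithLp.toLp 2 (h, 0)))
    (h2 : ∀ n b, f (WithLp.toLp 2 (0, lp.single 2 n b)) = g (WithLp.toLp 2 (0, lp.single 2 n b))) :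
    f = g := by
  let j : lp (fun _ : ℕ => B) 2 →L[ℂ] LiftSpace H B :=
    (WithLp.prodContinuousLinearEquiv 2 ℂ H (lp (fun _ : ℕ => B) 2)).symm.toContinuousLinearMap ∘L
      ContinuousLinearMap.inr ℂ H _
  have hj : f ∘L j = g ∘L j := by
    refine lp.ext_continuousLinearMap (by norm_num) fun n => ?_
    ext1 b
    exact h2 n b
  ext1 k
  have hk : k = WithLp.toLp 2 (k.fst, 0) + j k.snd := by
    refine (WithLp.equiv 2 _).injective (Prod.ext ?_ ?_) <;> simp [j]
  rw [hk, map_add, map_add, h1]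
  exact congrArg _ (DFunLike.congr_fun hj k.snd)

/-- Two lifts commute as soon as `T₁ T₂ = T₂ T₁` and the coefficients of `V₁ V₂` and `V₂ V₁` at
each index agree. -/
lemma lift_commute {T₁ T₂ : H →ₗ[ℂ] H} {a₁ a₂ : H →ₗ[ℂ] B} {A₁ A₂ C₁ C₂ : B →ₗ[ℂ] B}
    {V₁ V₂ : LiftSpace H B →ₗᵢ[ℂ] LiftSpace H B}
    (hV₁ : ∀ h, V₁ (WithLp.toLp 2 (h, 0)) = WithLp.toLp 2 (T₁ h, lp.single 2 0 (a₁ h)))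
    (hV₁' : ∀ n b, V₁ (WithLp.toLp 2 (0, lp.single 2 n b)) =
      WithLp.toLp 2 (0, lp.single 2 n (A₁ b) + lp.single 2 (n + 1) (C₁ b)))
    (hV₂ : ∀ h, V₂ (WithLp.toLp 2 (h, 0)) = WithLp.toLp 2 (T₂ h, lp.single 2 0 (a₂ h)))
    (hV₂' : ∀ n b, V₂ (WithLp.toLp 2 (0, lp.single 2 n b)) =
      WithLp.toLp 2 (0, lp.single 2 n (A₂ b) + lp.single 2 (n + 1) (C₂ b)))
    (hT : ∀ h, T₁ (T₂ h) = T₂ (T₁ h))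
    (ha : ∀ h, a₁ (T₂ h) + A₁ (a₂ h) = a₂ (T₁ h) + A₂ (a₁ h))
    (hCa : ∀ h, C₁ (a₂ h) = C₂ (a₁ h)) (hA : ∀ b, A₁ (A₂ b) = A₂ (A₁ b))
    (hAC : ∀ b, A₁ (C₂ b) + C₁ (A₂ b) = A₂ (C₁ b) + C₂ (A₁ b))
    (hC : ∀ b, C₁ (C₂ b) = C₂ (C₁ b)) (k : LiftSpace H B) : V₁ (V₂ k) = V₂ (V₁ k) := by
  have hsplit : ∀ (x : H) (y : lp (fun _ : ℕ => B) 2),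
      (WithLp.toLp 2 (x, y) : LiftSpace H B) =
        WithLp.toLp 2 (x, 0) + WithLp.toLp 2 (0, y) := fun x y => by
    refine (WithLp.equiv 2 _).injective (Prod.ext ?_ ?_) <;> simp
  have hadd : ∀ y z : lp (fun _ : ℕ => B) 2, (WithLp.toLp 2 (0, y + z) : LiftSpace H B) =
      WithLp.toLp 2 (0, y) + WithLp.toLp 2 (0, z) := fun y z => by
    refine (WithLp.equiv 2 _).injective (Prod.ext ?_ ?_) <;> simp
  have hcomm : V₁.toContinuousLinearMap ∘L V₂.toContinuousLinearMap =
      V₂.toContinuousLinearMap ∘L V₁.toContinuousLinearMap := by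
    refine LiftSpace.ext_clm (fun h => ?_) fun n b => ?_
    · change V₁ (V₂ _) = V₂ (V₁ _)
      rw [hV₁, hV₂, hsplit, hsplit (T₁ h), map_add, map_add, hV₁, hV₂, hV₁', hV₂', hT, hCa,
        hsplit, hsplit _ (lp.single 2 0 (a₂ _)), add_assoc, add_assoc, ← hadd, ← hadd,
        ← add_assoc, ← add_assoc, ← lp.single_add, ← lp.single_add, ha]
    · change V₁ (V₂ _) = V₂ (V₁ _)
      rw [hV₁', hV₂', hadd, hadd, map_add, map_add, hV₁', hV₁', hV₂', hV₂', ← hadd, ← hadd,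
        hA, hC]
      congr 2
      have := congrArg (lp.single (E := fun _ : ℕ => B) 2 (n + 1)) (hAC b)
      rw [lp.single_add, lp.single_add] at this
      have key : ∀ p x y q x' y' : lp (fun _ : ℕ => B) 2, y + x = y' + x' →
          (p + x) + (y + q) = (p + x') + (y' + q) := fun p x y q x' y' hxy => by
        rw [show p + x + (y + q) = p + (y + x) + q by abel, hxy]
        abel
      exact key _ _ _ _ _ _ this
  exact DFunLike.congr_fun hcomm k

end lift

/-! ### Defect operators and minimality -/

/-- Any `D` with `D* D = 1 - T* T` serves as a defect operator. -/
lemma exists_defect {H : Type u} [NormedAddCommGroup H] [InnerProductSpace ℂ H] [CompleteSpace H]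
    (T : H →L[ℂ] H) (hT : ‖T‖ ≤ 1) :
    ∃ D : H →L[ℂ] H, ∀ h, ‖T h‖ ^ 2 + ‖D h‖ ^ 2 = ‖h‖ ^ 2 := by
  have hpos : 0 ≤ 1 - star T * T := by
    rw [sub_nonneg]
    have := CStarAlgebra.star_mul_le_algebraMap_norm_sq (a := T)
    refine this.trans ?_
    rw [← map_one (algebraMap ℝ (H →L[ℂ] H))]
    exact algebraMap_mono _ (by nlinarith [norm_nonneg T])
  obtain ⟨D, hD⟩ := CStarAlgebra.nonneg_iff_eq_star_mul_self.1 hpos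
  refine ⟨D, fun h => ?_⟩
  have hn : ∀ S : H →L[ℂ] H, ⟪(star S * S) h, h⟫_ℂ = (‖S h‖ : ℂ) ^ 2 := fun S => by
    change ⟪adjoint S (S h), h⟫_ℂ = _
    rw [adjoint_inner_left, inner_self_eq_norm_sq_to_K]; rfl
  have h1 := hn D
  rw [← hD, sub_apply, inner_sub_left, hn T, show (1 : H →L[ℂ] H) h = h from rfl,
    inner_self_eq_norm_sq_to_K] at h1
  have h2 : ((‖h‖ ^ 2 - ‖T h‖ ^ 2 : ℝ) : ℂ) = ((‖D h‖ ^ 2 : ℝ) : ℂ) := by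
    push_cast; exact h1
  have h3 := Complex.ofReal_injective h2
  linarith

/-- A commuting isometric lift, with the intertwining relations expressed through inner products,
restricts to a minimal one on the closed span of the orbit of `J H`. -/
lemma exists_minimal {H K : Type u} [NormedAddCommGroup H] [InnerProductSpace ℂ H] [CompleteSpace H]
    [NormedAddCommGroup K] [InnerProductSpace ℂ K] [CompleteSpace K]
    (T1 T2 : H →L[ℂ] H) (J : H →ₗᵢ[ℂ] K) (W1 W2 : K →ₗᵢ[ℂ] K)
    (hc : ∀ k, W1 (W2 k) = W2 (W1 k))
    (hJ1 : ∀ h k, ⟪J h, W1 k⟫_ℂ = ⟪J (adjoint T1 h), k⟫_ℂ)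
    (hJ2 : ∀ h k, ⟪J h, W2 k⟫_ℂ = ⟪J (adjoint T2 h), k⟫_ℂ) :
    ∃ (K : Type u) (_ : NormedAddCommGroup K) (_ : InnerProductSpace ℂ K)
      (_ : CompleteSpace K)
      (Pi : H →L[ℂ] K) (V1 V2 : K →L[ℂ] K),
      (∀ h, ‖Pi h‖ = ‖h‖) ∧
      adjoint V1 ∘L V1 = 1 ∧ adjoint V2 ∘L V2 = 1 ∧
      V1 ∘L V2 = V2 ∘L V1 ∧
      adjoint V1 ∘L Pi = Pi ∘L adjoint T1 ∧
      adjoint V2 ∘L Pi = Pi ∘L adjoint T2 ∧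
      Dense (↑(Submodule.span ℂ
        (⋃ (n1 : ℕ) (n2 : ℕ), ⇑((V1 ^ n1) ∘L (V2 ^ n2)) '' Set.range ⇑Pi)) : Set K) := by
  let S : Set K := {k | ∃ (n1 n2 : ℕ) (h : H), (W1^[n1]) ((W2^[n2]) (J h)) = k}
  let M : Submodule ℂ K := (Submodule.span ℂ S).topologicalClosure
  have hSM : S ⊆ M := fun k hk => Submodule.le_topologicalClosure _ (Submodule.subset_span hk)
  have hinv : ∀ W : K →ₗᵢ[ℂ] K, (∀ k ∈ S, W k ∈ S) → ∀ k ∈ M, W k ∈ M := by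
    intro W hW
    refine Submodule.topologicalClosure_minimal (Submodule.span ℂ S) (t := M.comap W.toLinearMap)
      (Submodule.span_le.2 fun k hk => hSM (hW k hk)) ?_
    exact (Submodule.isClosed_topologicalClosure _).preimage W.continuous
  have hM1 : ∀ k ∈ M, W1 k ∈ M := hinv W1 <| by
    rintro _ ⟨n1, n2, h, rfl⟩
    exact ⟨n1 + 1, n2, h, Function.iterate_succ_apply' _ _ _⟩
  have hcomm : Function.Commute W1 W2 := hc
  have hM2 : ∀ k ∈ M, W2 k ∈ M := hinv W2 <| by
    rintro _ ⟨n1, n2, h, rfl⟩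
    refine ⟨n1, n2 + 1, h, ?_⟩
    rw [Function.iterate_succ_apply']
    exact hcomm.iterate_left n1 _
  have : CompleteSpace M := (Submodule.isClosed_topologicalClosure _).completeSpace_coe
  let Pi : H →L[ℂ] M := J.toContinuousLinearMap.codRestrict M fun h => hSM ⟨0, 0, h, rfl⟩
  let V1 : M →L[ℂ] M := (W1.toContinuousLinearMap ∘L M.subtypeL).codRestrict M fun k => hM1 k k.2
  let V2 : M →L[ℂ] M := (W2.toContinuousLinearMap ∘L M.subtypeL).codRestrict M fun k => hM2 k k.2
  refine ⟨M, inferInstance, inferInstance, inferInstance, Pi, V1, V2, fun h => J.norm_map h,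
    (norm_map_iff_adjoint_comp_self V1).1 fun k => W1.norm_map k,
    (norm_map_iff_adjoint_comp_self V2).1 fun k => W2.norm_map k, ?_, ?_, ?_, ?_⟩
  · ext k
    exact hc k
  · ext1 h
    refine ext_inner_right ℂ fun k => ?_
    rw [comp_apply, adjoint_inner_left]
    exact hJ1 h k
  · ext1 h
    refine ext_inner_right ℂ fun k => ?_
    rw [comp_apply, adjoint_inner_left]
    exact hJ2 h k
  · have hpow1 : ∀ (n : ℕ) (k : M), (((V1 ^ n) k : M) : K) = (W1^[n]) k := by
      intro n k
      induction n with
      | zero => rfl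
      | succ n ih => rw [pow_succ', Function.iterate_succ_apply', ← ih]; rfl
    have hpow2 : ∀ (n : ℕ) (k : M), (((V2 ^ n) k : M) : K) = (W2^[n]) k := by
      intro n k
      induction n with
      | zero => rfl
      | succ n ih => rw [pow_succ', Function.iterate_succ_apply', ← ih]; rfl
    rw [Subtype.dense_iff]
    intro x hx
    refine closure_mono ?_ hx
    have : Submodule.span ℂ S ≤ (Submodule.span ℂ
        (⋃ (n1 : ℕ) (n2 : ℕ), ⇑((V1 ^ n1) ∘L (V2 ^ n2)) '' Set.range ⇑Pi)).map M.subtype := by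
      refine Submodule.span_le.2 ?_
      rintro _ ⟨n1, n2, h, rfl⟩
      refine ⟨((V1 ^ n1) ∘L (V2 ^ n2)) (Pi h), Submodule.subset_span ?_, ?_⟩
      · exact Set.mem_iUnion₂.2 ⟨n1, n2, Pi h, ⟨h, rfl⟩, rfl⟩
      · change (((V1 ^ n1) ((V2 ^ n2) (Pi h)) : M) : K) = _
        rw [hpow1, hpow2]; rfl
    exact this

/-! ### The coefficient space -/

section block

variable {H : Type u} [NormedAddCommGroup H] [InnerProductSpace ℂ H]

/-- The Hilbert direct sum of four copies of `H`, arranged as a `2 × 2` array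
`((p, q), (p', q'))`. -/
abbrev Block (H : Type u) [NormedAddCommGroup H] : Type u :=
  WithLp 2 (WithLp 2 (H × H) × WithLp 2 (H × H))

/-- Assembles the pair `(p, q)` linearly into the Hilbert direct sum. -/
def pairL (H : Type u) [NormedAddCommGroup H] [InnerProductSpace ℂ H] :
    (H × H) →ₗ[ℂ] WithLp 2 (H × H) :=
  (WithLp.linearEquiv 2 ℂ (H × H)).symm.toLinearMap

/-- The embedding `h ↦ ((h, 0), (0, 0))`. -/
def blockIncl (H : Type u) [NormedAddCommGroup H] [InnerProductSpace ℂ H] : H →ₗ[ℂ] Block H where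
  toFun h := WithLp.toLp 2 (WithLp.toLp 2 (h, 0), 0)
  map_add' x y := by
    refine (WithLp.equiv 2 _).injective (Prod.ext ?_ ?_)
    · exact map_add (pairL H ∘ₗ LinearMap.inl ℂ H H) x y
    · simp
  map_smul' c x := by
    refine (WithLp.equiv 2 _).injective (Prod.ext ?_ ?_)
    · exact map_smul (pairL H ∘ₗ LinearMap.inl ℂ H H) c x
    · simp

lemma Block.ext {b b' : Block H} (h1 : b.fst.fst = b'.fst.fst) (h2 : b.fst.snd = b'.fst.snd)
    (h3 : b.snd.fst = b'.snd.fst) (h4 : b.snd.snd = b'.snd.snd) : b = b' :=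
  (WithLp.equiv 2 _).injective (Prod.ext ((WithLp.equiv 2 _).injective (Prod.ext h1 h2))
    ((WithLp.equiv 2 _).injective (Prod.ext h3 h4)))

/-- The partial isometry `((p, q), (p', q')) ↦ ((0, p), (0, p'))`. -/
def blockA (H : Type u) [NormedAddCommGroup H] [InnerProductSpace ℂ H] :
    Block H →ₗ[ℂ] Block H where
  toFun b := WithLp.toLp 2 (WithLp.toLp 2 (0, b.fst.fst), WithLp.toLp 2 (0, b.snd.fst))
  map_add' x y := by apply Block.ext <;> simp
  map_smul' c x := by apply Block.ext <;> simp

/-- The partial isometry `((p, q), (p', q')) ↦ ((q, 0), (q', 0))`. -/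
def blockC (H : Type u) [NormedAddCommGroup H] [InnerProductSpace ℂ H] :
    Block H →ₗ[ℂ] Block H where
  toFun b := WithLp.toLp 2 (WithLp.toLp 2 (b.fst.snd, 0), WithLp.toLp 2 (b.snd.snd, 0))
  map_add' x y := by apply Block.ext <;> simp
  map_smul' c x := by apply Block.ext <;> simp

lemma blockIncl_apply (h : H) :
    blockIncl H h = WithLp.toLp 2 (WithLp.toLp 2 (h, 0), 0) := rfl

lemma blockA_apply (b : Block H) : blockA H b =
    WithLp.toLp 2 (WithLp.toLp 2 (0, b.fst.fst), WithLp.toLp 2 (0, b.snd.fst)) := rfl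

lemma blockC_apply (b : Block H) : blockC H b =
    WithLp.toLp 2 (WithLp.toLp 2 (b.fst.snd, 0), WithLp.toLp 2 (b.snd.snd, 0)) := rfl

lemma Block.norm_sq (b : Block H) : ‖b‖ ^ 2 =
    (‖b.fst.fst‖ ^ 2 + ‖b.fst.snd‖ ^ 2) + (‖b.snd.fst‖ ^ 2 + ‖b.snd.snd‖ ^ 2) := by
  rw [WithLp.prod_norm_sq_eq_of_L2, WithLp.prod_norm_sq_eq_of_L2, WithLp.prod_norm_sq_eq_of_L2]

lemma Block.inner_def (b b' : Block H) : ⟪b, b'⟫_ℂ =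
    (⟪b.fst.fst, b'.fst.fst⟫_ℂ + ⟪b.fst.snd, b'.fst.snd⟫_ℂ) +
      (⟪b.snd.fst, b'.snd.fst⟫_ℂ + ⟪b.snd.snd, b'.snd.snd⟫_ℂ) := rfl

lemma norm_sq_blockA_add_blockC (b : Block H) :
    ‖blockA H b‖ ^ 2 + ‖blockC H b‖ ^ 2 = ‖b‖ ^ 2 := by
  rw [Block.norm_sq, Block.norm_sq, Block.norm_sq b, blockA_apply, blockC_apply]
  simp
  ring

lemma inner_blockC_blockA (b b' : Block H) : ⟪blockC H b, blockA H b'⟫_ℂ = 0 := by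
  rw [Block.inner_def, blockA_apply, blockC_apply]; simp

lemma inner_blockIncl_blockA (h : H) (b : Block H) : ⟪blockIncl H h, blockA H b⟫_ℂ = 0 := by
  rw [Block.inner_def, blockA_apply, blockIncl_apply]; simp

lemma norm_blockIncl_sq (h : H) : ‖blockIncl H h‖ ^ 2 = ‖h‖ ^ 2 := by
  rw [Block.norm_sq, blockIncl_apply]; simp

lemma blockA_blockA (b : Block H) : blockA H (blockA H b) = 0 := by
  apply Block.ext <;> simp [blockA_apply]

lemma blockC_blockC (b : Block H) : blockC H (blockC H b) = 0 := by
  apply Block.ext <;> simp [blockC_apply]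

lemma blockA_blockC_add (b : Block H) :
    blockA H (blockC H b) + blockC H (blockA H b) = b := by
  apply Block.ext <;> simp [blockA_apply, blockC_apply]

lemma blockC_blockIncl (h : H) : blockC H (blockIncl H h) = 0 := by
  apply Block.ext <;> simp [blockC_apply, blockIncl_apply]

lemma blockIncl_add_blockA (x y : H) : blockIncl H x + blockA H (blockIncl H y) =
    WithLp.toLp 2 (WithLp.toLp 2 (x, y), 0) := by
  apply Block.ext <;> simp [blockA_apply, blockIncl_apply]

end block

/-! ### The lifting theorem -/

theorem stmt_10 {H : Type u} [NormedAddCommGroup H] [InnerProductSpace ℂ H] [CompleteSpace H]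
    (T1 T2 : H →L[ℂ] H) (h1 : ‖T1‖ ≤ 1) (h2 : ‖T2‖ ≤ 1)
    (hc : T1 ∘L T2 = T2 ∘L T1) :
    ∃ (K : Type u) (_ : NormedAddCommGroup K) (_ : InnerProductSpace ℂ K)
      (_ : CompleteSpace K)
      (Pi : H →L[ℂ] K) (V1 V2 : K →L[ℂ] K),
      (∀ h, ‖Pi h‖ = ‖h‖) ∧
      adjoint V1 ∘L V1 = 1 ∧ adjoint V2 ∘L V2 = 1 ∧
      V1 ∘L V2 = V2 ∘L V1 ∧
      adjoint V1 ∘L Pi = Pi ∘L adjoint T1 ∧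
      adjoint V2 ∘L Pi = Pi ∘L adjoint T2 ∧
      Dense (↑(Submodule.span ℂ
        (⋃ (n1 : ℕ) (n2 : ℕ), ⇑((V1 ^ n1) ∘L (V2 ^ n2)) '' Set.range ⇑Pi)) : Set K) := by
  have hc' : ∀ h, T1 (T2 h) = T2 (T1 h) := fun h => DFunLike.congr_fun hc h
  obtain ⟨D1, hD1⟩ := exists_defect T1 h1
  obtain ⟨D2, hD2⟩ := exists_defect T2 h2
  obtain ⟨G, hG⟩ := exists_unitary
    (pairL H ∘ₗ ((D1 ∘L T2).toLinearMap.prod D2.toLinearMap))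
    (pairL H ∘ₗ ((D2 ∘L T1).toLinearMap.prod D1.toLinearMap)) (fun h => by
      rw [← sq_eq_sq₀ (norm_nonneg _) (norm_nonneg _), WithLp.prod_norm_sq_eq_of_L2,
        WithLp.prod_norm_sq_eq_of_L2]
      change ‖D1 (T2 h)‖ ^ 2 + ‖D2 h‖ ^ 2 = ‖D2 (T1 h)‖ ^ 2 + ‖D1 h‖ ^ 2
      have e1 := hD1 (T2 h)
      have e2 := hD2 (T1 h)
      rw [hc'] at e1
      linarith [hD1 h, hD2 h])
  -- `G` and its inverse, as linear maps on the coefficient space.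
  let g : Block H →ₗ[ℂ] Block H := G.toLinearEquiv.toLinearMap
  let g' : Block H →ₗ[ℂ] Block H := G.symm.toLinearEquiv.toLinearMap
  have hgD : ∀ h, g (blockIncl H (D1 (T2 h))) + g (blockA H (blockIncl H (D2 h))) =
      blockIncl H (D2 (T1 h)) + blockA H (blockIncl H (D1 h)) := by
    intro h
    rw [← map_add, blockIncl_add_blockA, blockIncl_add_blockA]
    exact hG h
  have hgn : ∀ b, ‖g b‖ = ‖b‖ := G.norm_map
  have hg'n : ∀ b, ‖g' b‖ = ‖b‖ := G.symm.norm_map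
  have hgi : ∀ b b', ⟪g b, g b'⟫_ℂ = ⟪b, b'⟫_ℂ := G.inner_map_map
  have hgg' : ∀ b, g (g' b) = b := G.apply_symm_apply
  have hg'g : ∀ b, g' (g b) = b := G.symm_apply_apply
  obtain ⟨V1, hV1h, hV1b, hV1f⟩ := exists_lift_isometry T1.toLinearMap
    (g ∘ₗ blockIncl H ∘ₗ D1.toLinearMap) (g ∘ₗ blockA H) (g ∘ₗ blockC H)
    (fun h => by simp [hgn, norm_blockIncl_sq, hD1])
    (fun b => by simp [hgn, norm_sq_blockA_add_blockC])
    (fun b b' => (hgi _ _).trans (inner_blockC_blockA _ _))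
    (fun h b => (hgi _ _).trans (inner_blockIncl_blockA _ _))
  obtain ⟨V2, hV2h, hV2b, hV2f⟩ := exists_lift_isometry T2.toLinearMap
    (blockIncl H ∘ₗ D2.toLinearMap) (blockA H ∘ₗ g') (blockC H ∘ₗ g')
    (fun h => by simp [norm_blockIncl_sq, hD2])
    (fun b => by simp [norm_sq_blockA_add_blockC, hg'n])
    (fun b b' => inner_blockC_blockA _ _)
    (fun h b => inner_blockIncl_blockA _ _)
  have hcomm : ∀ k, V1 (V2 k) = V2 (V1 k) := by
    refine lift_commute hV1h hV1b hV2h hV2b hc' (fun h => ?_) (fun h => ?_) (fun b => ?_)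
      (fun b => ?_) fun b => ?_
    · simp only [LinearMap.comp_apply, coe_coe, hg'g]
      exact hgD h
    · simp only [LinearMap.comp_apply, coe_coe, hg'g, blockC_blockIncl, map_zero]
    · simp only [LinearMap.comp_apply, hg'g, blockA_blockA, map_zero]
    · simp only [LinearMap.comp_apply, hg'g]
      rw [← map_add, blockA_blockC_add, blockA_blockC_add, hgg']
    · simp only [LinearMap.comp_apply, hg'g, blockC_blockC, map_zero]
  let J : H →ₗᵢ[ℂ] LiftSpace H (Block H) :=
    { toFun := fun h => WithLp.toLp 2 (h, 0)
      map_add' := fun x y => by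
        refine (WithLp.equiv 2 _).injective (Prod.ext ?_ ?_) <;> simp
      map_smul' := fun c x => by
        refine (WithLp.equiv 2 _).injective (Prod.ext ?_ ?_) <;> simp
      norm_map' := fun x => by simp }
  have hJ : ∀ h k, ⟪J h, k⟫_ℂ = ⟪h, k.fst⟫_ℂ := fun h k => by
    rw [WithLp.prod_inner_apply]; simp [J]
  refine exists_minimal T1 T2 J V1 V2 hcomm (fun h k => ?_)
    fun h k => ?_
  · rw [hJ, hJ, hV1f, adjoint_inner_left]; rfl
  · rw [hJ, hJ, hV2f, adjoint_inner_left]; rfl
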